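/- Let l0, l1, l2, l3 ∈ ℤ_{≥0} and let e1 > e3 > e2 be real numbers with e1+e2+e3 = 0 (corresponding to a purely imaginary modulus τ ∈ iℝ_{>0}). Then all the roots of the spectral polynomial Q^{(l0,l1,l2,l3)}(E) are real and distinct provided that one of the following conditions holds: (i) l3 = 0 and l0 ≥ l1 + l2 − 1; (ii) l0 + l3 + 1 = l1 + l2, l2 + l3 ≥ l0 + l1 + 1 and l1 + l3 ≥ l0 + l2 + 1; (iii) l0 + l3 = l1 + l2 + 1, l0 + l1 ≥ l2 + l3 + 1 and l0 + l2 ≥ l1 + l3 + 1. -/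

import Mathlib

open Polynomial

/-- The polynomial `q(E) = −(E/4 − e1(ã2+ã3)² − e2(ã1+ã3)² − e3(ã1+ã2)² + e3·α·β)`,
where `α = ã0+ã1+ã2+ã3` and `β = −ã0+1/2+ã1+ã2+ã3`. -/
noncomputable def heunQE (e1 e2 e3 a0 a1 a2 a3 : ℝ) : Polynomial ℝ :=
  Polynomial.C (e1 * (a2 + a3) ^ 2 + e2 * (a1 + a3) ^ 2 + e3 * (a1 + a2) ^ 2
      - e3 * ((a0 + a1 + a2 + a3) * (-a0 + 1 / 2 + a1 + a2 + a3)))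
    - Polynomial.C (1 / 4 : ℝ) * Polynomial.X

/-- The coefficients `c_m` (polynomials in `E`) of the local Heun solution at `e3`, defined by
`c_0 = 1`, `(e1−e3)(e2−e3)γ3 c_1 = q(E)`, and for `m ≥ 1`
`(e1−e3)(e2−e3)(m+1)(m+γ3) c_{m+1} = −(m−1+α)(m−1+β) c_{m−1}
  + [m((m−1+γ3)(e1+e2−2e3) + (e2−e3)γ1 + (e1−e3)γ2) + q(E)] c_m`,
with `γ_i = 2ã_i + 1/2`, `α = ã0+ã1+ã2+ã3`, `β = −ã0+1/2+ã1+ã2+ã3`. -/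
noncomputable def heunC (e1 e2 e3 a0 a1 a2 a3 : ℝ) : ℕ → Polynomial ℝ
  | 0 => 1
  | 1 => Polynomial.C (((e1 - e3) * (e2 - e3) * (2 * a3 + 1 / 2))⁻¹)
      * heunQE e1 e2 e3 a0 a1 a2 a3
  | m + 2 =>
      Polynomial.C (((e1 - e3) * (e2 - e3) * ((m : ℝ) + 2) * ((m : ℝ) + 1 + (2 * a3 + 1 / 2)))⁻¹) *
        (Polynomial.C (-(((m : ℝ) + (a0 + a1 + a2 + a3))
              * ((m : ℝ) + (-a0 + 1 / 2 + a1 + a2 + a3))))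
            * heunC e1 e2 e3 a0 a1 a2 a3 m
          + (Polynomial.C (((m : ℝ) + 1) * (((m : ℝ) + (2 * a3 + 1 / 2)) * (e1 + e2 - 2 * e3)
                + (e2 - e3) * (2 * a1 + 1 / 2) + (e1 - e3) * (2 * a2 + 1 / 2)))
              + heunQE e1 e2 e3 a0 a1 a2 a3) * heunC e1 e2 e3 a0 a1 a2 a3 (m + 1))

/-- `P_{ã0,ã1,ã2,ã3}(E)`: the monic normalization of `c_{N+1}(E)`,
where `N = −(ã0+ã1+ã2+ã3)`. -/
noncomputable def specP (e1 e2 e3 a0 a1 a2 a3 : ℝ) (N : ℕ) : Polynomial ℝ :=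
  Polynomial.C ((heunC e1 e2 e3 a0 a1 a2 a3 (N + 1)).leadingCoeff)⁻¹ *
    heunC e1 e2 e3 a0 a1 a2 a3 (N + 1)

/-- The factor `P⁽⁰⁾(E)` of the spectral polynomial. -/
noncomputable def specP0 (e1 e2 e3 : ℝ) (l0 l1 l2 l3 : ℕ) : Polynomial ℝ :=
  if (l0 + l1 + l2 + l3) % 2 = 0 then
    specP e1 e2 e3 (-(l0 : ℝ) / 2) (-(l1 : ℝ) / 2) (-(l2 : ℝ) / 2) (-(l3 : ℝ) / 2)
      ((l0 + l1 + l2 + l3) / 2)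
  else if l1 + l2 + l3 + 3 ≤ l0 then
    specP e1 e2 e3 (-(l0 : ℝ) / 2) (((l1 : ℝ) + 1) / 2) (((l2 : ℝ) + 1) / 2) (((l3 : ℝ) + 1) / 2)
      ((l0 - l1 - l2 - l3 - 3) / 2)
  else if l0 = l1 + l2 + l3 + 1 then 1
  else
    specP e1 e2 e3 (((l0 : ℝ) + 1) / 2) (-(l1 : ℝ) / 2) (-(l2 : ℝ) / 2) (-(l3 : ℝ) / 2)
      ((l1 + l2 + l3 - l0 - 1) / 2)

/-- The factor `P⁽¹⁾(E)` of the spectral polynomial. -/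
noncomputable def specP1 (e1 e2 e3 : ℝ) (l0 l1 l2 l3 : ℕ) : Polynomial ℝ :=
  if (l0 + l1 + l2 + l3) % 2 = 0 then
    if l2 + l3 + 2 ≤ l0 + l1 then
      specP e1 e2 e3 (-(l0 : ℝ) / 2) (-(l1 : ℝ) / 2) (((l2 : ℝ) + 1) / 2) (((l3 : ℝ) + 1) / 2)
        ((l0 + l1 - l2 - l3) / 2 - 1)
    else if l0 + l1 = l2 + l3 then 1
    else
      specP e1 e2 e3 (((l0 : ℝ) + 1) / 2) (((l1 : ℝ) + 1) / 2) (-(l2 : ℝ) / 2) (-(l3 : ℝ) / 2)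
        ((l2 + l3 - l0 - l1) / 2 - 1)
  else
    if l0 + l2 + l3 + 3 ≤ l1 then
      specP e1 e2 e3 (((l0 : ℝ) + 1) / 2) (-(l1 : ℝ) / 2) (((l2 : ℝ) + 1) / 2) (((l3 : ℝ) + 1) / 2)
        ((l1 - l0 - l2 - l3 - 3) / 2)
    else if l1 = l0 + l2 + l3 + 1 then 1
    else
      specP e1 e2 e3 (-(l0 : ℝ) / 2) (((l1 : ℝ) + 1) / 2) (-(l2 : ℝ) / 2) (-(l3 : ℝ) / 2)
        ((l0 + l2 + l3 - l1 - 1) / 2)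

/-- The factor `P⁽²⁾(E)` of the spectral polynomial. -/
noncomputable def specP2 (e1 e2 e3 : ℝ) (l0 l1 l2 l3 : ℕ) : Polynomial ℝ :=
  if (l0 + l1 + l2 + l3) % 2 = 0 then
    if l1 + l3 + 2 ≤ l0 + l2 then
      specP e1 e2 e3 (-(l0 : ℝ) / 2) (((l1 : ℝ) + 1) / 2) (-(l2 : ℝ) / 2) (((l3 : ℝ) + 1) / 2)
        ((l0 + l2 - l1 - l3) / 2 - 1)
    else if l0 + l2 = l1 + l3 then 1
    else
      specP e1 e2 e3 (((l0 : ℝ) + 1) / 2) (-(l1 : ℝ) / 2) (((l2 : ℝ) + 1) / 2) (-(l3 : ℝ) / 2)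
        ((l1 + l3 - l0 - l2) / 2 - 1)
  else
    if l0 + l1 + l3 + 3 ≤ l2 then
      specP e1 e2 e3 (((l0 : ℝ) + 1) / 2) (((l1 : ℝ) + 1) / 2) (-(l2 : ℝ) / 2) (((l3 : ℝ) + 1) / 2)
        ((l2 - l0 - l1 - l3 - 3) / 2)
    else if l2 = l0 + l1 + l3 + 1 then 1
    else
      specP e1 e2 e3 (-(l0 : ℝ) / 2) (-(l1 : ℝ) / 2) (((l2 : ℝ) + 1) / 2) (-(l3 : ℝ) / 2)
        ((l0 + l1 + l3 - l2 - 1) / 2)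

/-- The factor `P⁽³⁾(E)` of the spectral polynomial. -/
noncomputable def specP3 (e1 e2 e3 : ℝ) (l0 l1 l2 l3 : ℕ) : Polynomial ℝ :=
  if (l0 + l1 + l2 + l3) % 2 = 0 then
    if l1 + l2 + 2 ≤ l0 + l3 then
      specP e1 e2 e3 (-(l0 : ℝ) / 2) (((l1 : ℝ) + 1) / 2) (((l2 : ℝ) + 1) / 2) (-(l3 : ℝ) / 2)
        ((l0 + l3 - l1 - l2) / 2 - 1)
    else if l0 + l3 = l1 + l2 then 1
    else
      specP e1 e2 e3 (((l0 : ℝ) + 1) / 2) (-(l1 : ℝ) / 2) (-(l2 : ℝ) / 2) (((l3 : ℝ) + 1) / 2)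
        ((l1 + l2 - l0 - l3) / 2 - 1)
  else
    if l0 + l1 + l2 + 3 ≤ l3 then
      specP e1 e2 e3 (((l0 : ℝ) + 1) / 2) (((l1 : ℝ) + 1) / 2) (((l2 : ℝ) + 1) / 2) (-(l3 : ℝ) / 2)
        ((l3 - l0 - l1 - l2 - 3) / 2)
    else if l3 = l0 + l1 + l2 + 1 then 1
    else
      specP e1 e2 e3 (-(l0 : ℝ) / 2) (-(l1 : ℝ) / 2) (-(l2 : ℝ) / 2) (((l3 : ℝ) + 1) / 2)
        ((l0 + l1 + l2 - l3 - 1) / 2)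

/-- The spectral polynomial `Q^{(l0,l1,l2,l3)}(E) = P⁽⁰⁾P⁽¹⁾P⁽²⁾P⁽³⁾` of the
Treibich-Verdier operator `H^{(l0,l1,l2,l3)}`. -/
noncomputable def specQ (e1 e2 e3 : ℝ) (l0 l1 l2 l3 : ℕ) : Polynomial ℝ :=
  specP0 e1 e2 e3 l0 l1 l2 l3 * specP1 e1 e2 e3 l0 l1 l2 l3 *
    specP2 e1 e2 e3 l0 l1 l2 l3 * specP3 e1 e2 e3 l0 l1 l2 l3

/-- nonzero, with simple and real roots over `ℂ`. -/
def GoodPoly (p : Polynomial ℝ) : Prop :=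
  p.map (algebraMap ℝ ℂ) ≠ 0 ∧ (p.map (algebraMap ℝ ℂ)).roots.Nodup ∧
    ∀ z ∈ (p.map (algebraMap ℝ ℂ)).roots, z.im = 0

theorem rec_coeff (c : ℕ → ℝ[X]) (a b d : ℕ → ℝ) (h0 : c 0 = 1)
    (h1 : C (a 0) * c 1 = C (b 0) - C (1 / 4) * X)
    (h2 : ∀ m, C (a (m + 1)) * c (m + 2) =
      (C (b (m + 1)) - C (1 / 4) * X) * c (m + 1) - C (d (m + 1)) * c m)
    (ha : ∀ m, a m ≠ 0) :
    ∀ m, (∀ j, m < j → (c m).coeff j = 0) ∧ (c m).coeff m ≠ 0 := by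
  have key : ∀ m, ((∀ j, m < j → (c m).coeff j = 0) ∧ (c m).coeff m ≠ 0) ∧
      ((∀ j, m + 1 < j → (c (m + 1)).coeff j = 0) ∧ (c (m + 1)).coeff (m + 1) ≠ 0) := by
    intro m
    induction m with
    | zero =>
      refine ⟨⟨?_, ?_⟩, ?_, ?_⟩
      · intro j hj
        rw [h0, coeff_one, if_neg (by omega)]
      · simp [h0]
      · intro j hj
        have := congrArg (fun p => coeff p j) h1
        simp only [coeff_C_mul, coeff_sub, coeff_C, coeff_X] at this
        rw [if_neg (by omega), if_neg (by omega)] at this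
        simpa [ha 0] using this
      · intro h
        have := congrArg (fun p => coeff p 1) h1
        simp only [coeff_C_mul, coeff_sub, coeff_C, coeff_X] at this
        rw [h] at this
        norm_num at this
    | succ m ih =>
      obtain ⟨⟨i1, i2⟩, i3, i4⟩ := ih
      have hc : ∀ j, a (m + 1) * (c (m + 2)).coeff (j + 1) =
          b (m + 1) * (c (m + 1)).coeff (j + 1) - 1 / 4 * (c (m + 1)).coeff j
            - d (m + 1) * (c m).coeff (j + 1) := by
        intro j
        have := congrArg (fun p => coeff p (j + 1)) (h2 m)
        simpa only [coeff_C_mul, coeff_sub, sub_mul, mul_assoc, coeff_X_mul] using this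
      refine ⟨⟨i3, i4⟩, ?_, ?_⟩
      · intro j hj
        obtain ⟨k, rfl⟩ : ∃ k, j = k + 1 := ⟨j - 1, by omega⟩
        have := hc k
        rw [i3 _ (by omega), i3 _ (by omega), i1 _ (by omega)] at this
        simpa [ha (m + 1)] using this
      · intro h
        have := hc (m + 1)
        rw [i3 (m + 1 + 1) (by omega), i1 _ (by omega), h] at this
        apply i4
        linarith
  exact fun m => (key m).1

theorem rec_natDegree (c : ℕ → ℝ[X])
    (h : ∀ m, (∀ j, m < j → (c m).coeff j = 0) ∧ (c m).coeff m ≠ 0) (m : ℕ) :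
    (c m).natDegree = m := by
  apply le_antisymm
  · rw [natDegree_le_iff_coeff_eq_zero]
    exact (h m).1
  · exact le_natDegree_of_ne_zero (h m).2

theorem rec_good (c : ℕ → ℝ[X]) (a b d : ℕ → ℝ) (N : ℕ) (h0 : c 0 = 1)
    (h1 : C (a 0) * c 1 = C (b 0) - C (1 / 4) * X)
    (h2 : ∀ m, C (a (m + 1)) * c (m + 2) =
      (C (b (m + 1)) - C (1 / 4) * X) * c (m + 1) - C (d (m + 1)) * c m)
    (ha : ∀ m, a m ≠ 0) (hd : ∀ m, m < N → 0 < a m * d (m + 1)) :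
    GoodPoly (c (N + 1)) := by
  have hco := rec_coeff c a b d h0 h1 h2 ha
  have hne : c (N + 1) ≠ 0 := fun h => (hco (N + 1)).2 (by rw [h]; simp)
  have hmap : (c (N + 1)).map (algebraMap ℝ ℂ) ≠ 0 :=
    (Polynomial.map_ne_zero_iff (algebraMap ℝ ℂ).injective).2 hne
  obtain ⟨h, hh0, hh⟩ : ∃ h : ℕ → ℝ, h 0 = 1 ∧ ∀ m, h (m + 1) = h m * (a m / d (m + 1)) :=
    ⟨fun m => ∏ j ∈ Finset.range m, (a j / d (j + 1)), by simp, fun m => by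
      exact Finset.prod_range_succ _ _⟩
  have hdn : ∀ m, m < N → d (m + 1) ≠ 0 := fun m hm h => by
    have := hd m hm; rw [h] at this; simp at this
  have hpos : ∀ m, m ≤ N → 0 < h m := by
    intro m
    induction m with
    | zero => intro _; rw [hh0]; norm_num
    | succ m ih =>
      intro hm
      rw [hh]
      apply mul_pos (ih (by omega))
      have := hd m (by omega)
      have h3 : a m / d (m + 1) = a m * d (m + 1) / (d (m + 1)) ^ 2 := by
        have := hdn m (by omega)
        field_simp
      rw [h3]
      have := hdn m (by omega)
      positivity
  have hhd : ∀ m, m < N → h (m + 1) * d (m + 1) = h m * a m := by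
    intro m hm
    rw [hh]
    have := hdn m hm
    field_simp
  -- Christoffel-Darboux
  have ev1 : ∀ x : ℂ, (a 0 : ℂ) * aeval x (c 1) = b 0 - 1 / 4 * x := by
    intro x
    have := congrArg (aeval x) h1
    simpa using this
  have ev2 : ∀ (m : ℕ) (x : ℂ), (a (m + 1) : ℂ) * aeval x (c (m + 2)) =
      (b (m + 1) - 1 / 4 * x) * aeval x (c (m + 1)) - d (m + 1) * aeval x (c m) := by
    intro m x
    have := congrArg (aeval x) (h2 m)
    simpa using this
  have CD : ∀ (x y : ℂ) (m : ℕ), m ≤ N →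
      (h m : ℂ) * a m * (aeval x (c (m + 1)) * aeval y (c m) - aeval x (c m) * aeval y (c (m + 1)))
        = (y - x) / 4 * ∑ j ∈ Finset.range (m + 1), (h j : ℂ) * (aeval x (c j) * aeval y (c j)) := by
    intro x y m
    induction m with
    | zero =>
      intro _
      simp only [zero_add, Finset.range_one, Finset.sum_singleton, h0, map_one, hh0]
      push_cast
      linear_combination ev1 x - ev1 y
    | succ m ih =>
      intro hm
      rw [Finset.sum_range_succ, mul_add, ← ih (by omega)]
      have e : (h (m + 1) : ℂ) * d (m + 1) = h m * a m := by exact_mod_cast hhd m (by omega)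
      linear_combination (h (m + 1) : ℂ) * aeval y (c (m + 1)) * ev2 m x
        - (h (m + 1) : ℂ) * aeval x (c (m + 1)) * ev2 m y
        + (aeval x (c (m + 1)) * aeval y (c m) - aeval x (c m) * aeval y (c (m + 1))) * e
  have CD' : ∀ (x : ℝ) (m : ℕ), m ≤ N →
      h m * a m * ((derivative (c (m + 1))).eval x * (c m).eval x
        - (derivative (c m)).eval x * (c (m + 1)).eval x)
        = - 1 / 4 * ∑ j ∈ Finset.range (m + 1), h j * ((c j).eval x) ^ 2 := by
    intro x m
    induction m with
    | zero =>
      intro _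
      have := congrArg (fun p => eval x (derivative p)) h1
      simp at this
      simp [h0, hh0]
      linear_combination this
    | succ m ih =>
      intro hm
      rw [Finset.sum_range_succ, mul_add, ← ih (by omega)]
      have e := hhd m (by omega)
      have f1 := congrArg (fun p => eval x (derivative p)) (h2 m)
      have f2 := congrArg (fun p => eval x p) (h2 m)
      simp only [derivative_mul, derivative_sub, derivative_C, derivative_X, eval_add, eval_mul,
        eval_sub, eval_C, eval_X, eval_zero, eval_one] at f1 f2
      linear_combination (h (m + 1)) * (c (m + 1)).eval x * f1
        - (h (m + 1)) * (derivative (c (m + 1))).eval x * f2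
        + (eval x (derivative (c (m + 1))) * eval x (c m)
          - eval x (derivative (c m)) * eval x (c (m + 1))) * e
  have hreal : ∀ z ∈ ((c (N + 1)).map (algebraMap ℝ ℂ)).roots, z.im = 0 := by
    intro z hz
    have hz0 : aeval z (c (N + 1)) = 0 := by
      have := (mem_roots hmap).1 hz
      rwa [IsRoot.def, eval_map_algebraMap] at this
    have hcj : ∀ p : ℝ[X], aeval (starRingEnd ℂ z) p = starRingEnd ℂ (aeval z p) := by
      intro p
      exact (Polynomial.aeval_conj p z)
    have hcd := CD z (starRingEnd ℂ z) N le_rfl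
    simp only [hcj, hz0, map_zero, zero_mul, mul_zero, sub_zero, Complex.mul_conj] at hcd
    have hs : (∑ j ∈ Finset.range (N + 1), (h j : ℂ) * (Complex.normSq (aeval z (c j)) : ℂ)) ≠ 0 := by
      have : 0 < ∑ j ∈ Finset.range (N + 1), h j * (Complex.normSq (aeval z (c j))) := by
        apply Finset.sum_pos'
        · intro j hj
          have := hpos j (by simp at hj; omega)
          have := Complex.normSq_nonneg (aeval z (c j))
          positivity
        · refine ⟨0, by simp, ?_⟩
          simp [h0, hh0]
      exact_mod_cast this.ne'
    have h4 := (mul_eq_zero.1 hcd.symm).resolve_right hs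
    have h5 : starRingEnd ℂ z = z := by linear_combination 4 * h4
    exact Complex.conj_eq_iff_im.1 h5
  refine ⟨hmap, ?_, hreal⟩
  rw [Multiset.nodup_iff_count_le_one]
  intro z
  by_contra hlt
  push Not at hlt
  have hz : z ∈ ((c (N + 1)).map (algebraMap ℝ ℂ)).roots :=
    Multiset.count_pos.1 (by omega)
  rw [count_roots, one_lt_rootMultiplicity_iff_isRoot hmap] at hlt
  obtain ⟨r1, r2⟩ := hlt
  obtain ⟨x, rfl⟩ : ∃ x : ℝ, z = x := ⟨z.re, Complex.ext rfl (by simpa using hreal z hz)⟩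
  rw [derivative_map] at r2
  have g : ∀ p : ℝ[X], (p.map (algebraMap ℝ ℂ)).IsRoot (x : ℂ) → p.eval x = 0 := by
    intro p hp
    rw [IsRoot.def] at hp
    have : (p.map (algebraMap ℝ ℂ)).eval (algebraMap ℝ ℂ x) = 0 := hp
    rw [eval_map_apply] at this
    simpa using this
  have hcd := CD' x N le_rfl
  rw [g _ r1, g _ r2] at hcd
  have : 0 < ∑ j ∈ Finset.range (N + 1), h j * ((c j).eval x) ^ 2 := by
    apply Finset.sum_pos'
    · intro j hj
      have := hpos j (by simp at hj; omega)
      positivity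
    · refine ⟨0, by simp, ?_⟩
      simp [h0, hh0]
  linarith

/-- Coefficients of the three-term recurrence. -/
noncomputable def rcA (e1 e2 e3 a3 : ℝ) (m : ℕ) : ℝ :=
  (e1 - e3) * (e2 - e3) * ((m : ℝ) + 1) * ((m : ℝ) + (2 * a3 + 1 / 2))

/-- Diagonal coefficients of the three-term recurrence. -/
noncomputable def rcB (e1 e2 e3 a0 a1 a2 a3 : ℝ) (m : ℕ) : ℝ :=
  (m : ℝ) * (((m : ℝ) - 1 + (2 * a3 + 1 / 2)) * (e1 + e2 - 2 * e3)
      + (e2 - e3) * (2 * a1 + 1 / 2) + (e1 - e3) * (2 * a2 + 1 / 2))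
    + (e1 * (a2 + a3) ^ 2 + e2 * (a1 + a3) ^ 2 + e3 * (a1 + a2) ^ 2
      - e3 * ((a0 + a1 + a2 + a3) * (-a0 + 1 / 2 + a1 + a2 + a3)))

/-- Lower coefficients of the three-term recurrence. -/
noncomputable def rcD (a0 a1 a2 a3 : ℝ) (m : ℕ) : ℝ :=
  ((m : ℝ) - 1 + (a0 + a1 + a2 + a3)) * ((m : ℝ) - 1 + (-a0 + 1 / 2 + a1 + a2 + a3))

theorem rcA_ne (e1 e2 e3 a3 : ℝ) (h1 : e1 ≠ e3) (h2 : e2 ≠ e3)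
    (hg : ∀ m : ℕ, (m : ℝ) + (2 * a3 + 1 / 2) ≠ 0) (m : ℕ) : rcA e1 e2 e3 a3 m ≠ 0 := by
  unfold rcA
  have := hg m
  have h3 : (m : ℝ) + 1 ≠ 0 := by positivity
  have h4 := sub_ne_zero.2 h1
  have h5 := sub_ne_zero.2 h2
  positivity

theorem heunC_one (e1 e2 e3 a0 a1 a2 a3 : ℝ) (h : rcA e1 e2 e3 a3 0 ≠ 0) :
    C (rcA e1 e2 e3 a3 0) * heunC e1 e2 e3 a0 a1 a2 a3 1 =
      C (rcB e1 e2 e3 a0 a1 a2 a3 0) - C (1 / 4) * X := by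
  rw [heunC, ← mul_assoc, ← C_mul]
  have : (e1 - e3) * (e2 - e3) * (2 * a3 + 1 / 2) = rcA e1 e2 e3 a3 0 := by
    simp [rcA]
  rw [this, mul_inv_cancel₀ h, C_1, one_mul, heunQE]
  simp [rcB]

theorem heunC_rec (e1 e2 e3 a0 a1 a2 a3 : ℝ) (m : ℕ) (h : rcA e1 e2 e3 a3 (m + 1) ≠ 0) :
    C (rcA e1 e2 e3 a3 (m + 1)) * heunC e1 e2 e3 a0 a1 a2 a3 (m + 2) =
      (C (rcB e1 e2 e3 a0 a1 a2 a3 (m + 1)) - C (1 / 4) * X) * heunC e1 e2 e3 a0 a1 a2 a3 (m + 1)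
        - C (rcD a0 a1 a2 a3 (m + 1)) * heunC e1 e2 e3 a0 a1 a2 a3 m := by
  rw [heunC, ← mul_assoc, ← C_mul]
  have : (e1 - e3) * (e2 - e3) * ((m : ℝ) + 2) * ((m : ℝ) + 1 + (2 * a3 + 1 / 2))
      = rcA e1 e2 e3 a3 (m + 1) := by
    simp only [rcA]; push_cast; ring
  rw [this, mul_inv_cancel₀ h, C_1, one_mul, heunQE]
  have e1' : rcB e1 e2 e3 a0 a1 a2 a3 (m + 1) =
      ((m : ℝ) + 1) * (((m : ℝ) + (2 * a3 + 1 / 2)) * (e1 + e2 - 2 * e3)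
                + (e2 - e3) * (2 * a1 + 1 / 2) + (e1 - e3) * (2 * a2 + 1 / 2)) +
      (e1 * (a2 + a3) ^ 2 + e2 * (a1 + a3) ^ 2 + e3 * (a1 + a2) ^ 2
      - e3 * ((a0 + a1 + a2 + a3) * (-a0 + 1 / 2 + a1 + a2 + a3))) := by
    simp only [rcB]; push_cast; ring
  have e2' : rcD a0 a1 a2 a3 (m + 1) = ((m : ℝ) + (a0 + a1 + a2 + a3))
              * ((m : ℝ) + (-a0 + 1 / 2 + a1 + a2 + a3)) := by
    simp only [rcD]; push_cast; ring
  rw [e1', e2', C_add, C_neg]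
  ring

/-- Heun's differential equation. -/
def HODE (e1 e2 e3 a0 a1 a2 a3 E : ℝ) (p : ℝ[X]) : Prop :=
  (X - C e1) * (X - C e2) * (X - C e3) * derivative (derivative p)
    + (C (2 * a1 + 1 / 2) * (X - C e2) * (X - C e3) + C (2 * a2 + 1 / 2) * (X - C e1) * (X - C e3)
      + C (2 * a3 + 1 / 2) * (X - C e1) * (X - C e2)) * derivative p
    + (C ((a0 + a1 + a2 + a3) * (-a0 + 1 / 2 + a1 + a2 + a3)) * X
      + C (E / 4 - (e1 * (a2 + a3) ^ 2 + e2 * (a1 + a3) ^ 2 + e3 * (a1 + a2) ^ 2))) * p = 0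

theorem taylor_derivative' (r : ℝ) (p : ℝ[X]) :
    taylor r (derivative p) = derivative (taylor r p) := by
  simp [taylor_apply, derivative_comp]

theorem HODE_iff (e1 e2 e3 a0 a1 a2 a3 E : ℝ) (p : ℝ[X]) :
    HODE e1 e2 e3 a0 a1 a2 a3 E p ↔
      (rcA e1 e2 e3 a3 0 * (taylor e3 p).coeff 1 =
        (rcB e1 e2 e3 a0 a1 a2 a3 0 - 1 / 4 * E) * (taylor e3 p).coeff 0) ∧
      ∀ m, rcA e1 e2 e3 a3 (m + 1) * (taylor e3 p).coeff (m + 2) =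
        (rcB e1 e2 e3 a0 a1 a2 a3 (m + 1) - 1 / 4 * E) * (taylor e3 p).coeff (m + 1)
          - rcD a0 a1 a2 a3 (m + 1) * (taylor e3 p).coeff m := by
  unfold HODE
  rw [← (taylor_injective e3).eq_iff]
  simp only [map_add (taylor e3), map_zero (taylor e3), taylor_mul, map_sub (taylor e3), taylor_X, taylor_C, taylor_derivative']
  set u := taylor e3 p with hu
  have expand : (X + C e3 - C e1) * (X + C e3 - C e2) * (X + C e3 - C e3) *
        derivative (derivative u) +
      (C (2 * a1 + 1 / 2) * (X + C e3 - C e2) * (X + C e3 - C e3) +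
        C (2 * a2 + 1 / 2) * (X + C e3 - C e1) * (X + C e3 - C e3) +
        C (2 * a3 + 1 / 2) * (X + C e3 - C e1) * (X + C e3 - C e2)) * derivative u +
      (C ((a0 + a1 + a2 + a3) * (-a0 + 1 / 2 + a1 + a2 + a3)) * (X + C e3) +
        C (E / 4 - (e1 * (a2 + a3) ^ 2 + e2 * (a1 + a3) ^ 2 + e3 * (a1 + a2) ^ 2))) * u =
      X * (X * (X * derivative (derivative u))
          + C (3 / 2 + 2 * (a1 + a2 + a3)) * (X * derivative u)
          + C ((a0 + a1 + a2 + a3) * (-a0 + 1 / 2 + a1 + a2 + a3)) * u)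
      - C (e1 + e2 - 2 * e3) * (X * (X * derivative (derivative u)))
      - C ((2 * a3 + 1 / 2) * (e1 + e2 - 2 * e3)
          + (e2 - e3) * (2 * a1 + 1 / 2) + (e1 - e3) * (2 * a2 + 1 / 2)) * (X * derivative u)
      - C (e1 * (a2 + a3) ^ 2 + e2 * (a1 + a3) ^ 2 + e3 * (a1 + a2) ^ 2
          - e3 * ((a0 + a1 + a2 + a3) * (-a0 + 1 / 2 + a1 + a2 + a3)) - 1 / 4 * E) * u
      + C ((e1 - e3) * (e2 - e3)) * (X * derivative (derivative u))
      + C ((e1 - e3) * (e2 - e3) * (2 * a3 + 1 / 2)) * derivative u := by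
    have q4 : C (E / 4) = C (1 / 4) * C E := by rw [← C_mul]; congr 1; ring
    have q3 : (C (3 / 2 : ℝ) : ℝ[X]) = 3 * C (1 / 2) := by
      have : (3 : ℝ[X]) = C 3 := rfl
      rw [this, ← C_mul]; congr 1; norm_num
    have q2 : (C (2 : ℝ) : ℝ[X]) = 2 := rfl
    simp only [C_add, C_sub, C_mul, C_neg, C_pow, q4, q3, q2]
    ring
  rw [expand, Polynomial.ext_iff]
  have x1 : ∀ (v : ℝ[X]) (m : ℕ), (X * derivative v).coeff m = m * v.coeff m := by
    intro v m
    cases m with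
    | zero => simp
    | succ k => rw [coeff_X_mul, coeff_derivative]; push_cast; ring
  have x2 : ∀ (v : ℝ[X]) (m : ℕ), (X * derivative (derivative v)).coeff m
      = m * ((m + 1) * v.coeff (m + 1)) := by
    intro v m
    rw [x1, coeff_derivative]; ring
  have x3 : ∀ (v : ℝ[X]) (m : ℕ), (X * (X * derivative (derivative v))).coeff m
      = m * ((m - 1) * v.coeff m) := by
    intro v m
    cases m with
    | zero => simp
    | succ k => rw [coeff_X_mul, x2]; push_cast; ring
  have z1 : ∀ m : ℕ, ((0 : ℝ[X]).coeff m) = 0 := fun m => coeff_zero m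
  constructor
  · intro h
    constructor
    · have := h 0
      simp only [coeff_add, coeff_sub, coeff_C_mul, coeff_X_mul_zero, x1, x3, coeff_derivative,
        z1] at this
      simp only [rcA, rcB]
      push_cast at this ⊢
      linear_combination this
    · intro m
      have := h (m + 1)
      simp only [coeff_add, coeff_sub, coeff_C_mul, coeff_X_mul _ m, x1, x3, coeff_derivative,
        z1] at this
      simp only [rcA, rcB, rcD]
      push_cast at this ⊢
      linear_combination this
  · rintro ⟨h0, h⟩ m
    cases m with
    | zero =>
      simp only [coeff_add, coeff_sub, coeff_C_mul, coeff_X_mul_zero, x1, x3, coeff_derivative,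
        z1]
      simp only [rcA, rcB] at h0
      push_cast at h0 ⊢
      linear_combination h0
    | succ m =>
      have := h m
      simp only [coeff_add, coeff_sub, coeff_C_mul, coeff_X_mul _ m, x1, x3, coeff_derivative,
        z1]
      simp only [rcA, rcB, rcD] at this
      push_cast at this ⊢
      linear_combination this

/-- Existence of a nonzero polynomial solution of degree at most `N`. -/
def HSol (e1 e2 e3 a0 a1 a2 a3 : ℝ) (N : ℕ) (E : ℝ) : Prop :=
  ∃ p : ℝ[X], p ≠ 0 ∧ p.natDegree ≤ N ∧ HODE e1 e2 e3 a0 a1 a2 a3 E p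

theorem heunC_root_iff (e1 e2 e3 a0 a1 a2 a3 : ℝ) (N : ℕ) (E : ℝ) (h1 : e1 ≠ e3) (h2 : e2 ≠ e3)
    (hg : ∀ m : ℕ, (m : ℝ) + (2 * a3 + 1 / 2) ≠ 0) (hN : a0 + a1 + a2 + a3 = -N) :
    (heunC e1 e2 e3 a0 a1 a2 a3 (N + 1)).eval E = 0 ↔ HSol e1 e2 e3 a0 a1 a2 a3 N E := by
  have hA := rcA_ne e1 e2 e3 a3 h1 h2 hg
  have r0 : (heunC e1 e2 e3 a0 a1 a2 a3 0).eval E = 1 := by simp [heunC]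
  have r1 := congrArg (eval E) (heunC_one e1 e2 e3 a0 a1 a2 a3 (hA 0))
  have r2 := fun m => congrArg (eval E) (heunC_rec e1 e2 e3 a0 a1 a2 a3 m (hA _))
  simp only [eval_mul, eval_sub, eval_C, eval_X] at r1 r2
  set c : ℕ → ℝ := fun m => (heunC e1 e2 e3 a0 a1 a2 a3 m).eval E with hc
  constructor
  · intro h
    have hz : ∀ k, c (N + 1 + k) = 0 ∧ c (N + 1 + k + 1) = 0 := by
      intro k
      induction k with
      | zero =>
        refine ⟨h, ?_⟩
        have := r2 N
        rw [h] at this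
        have d0 : rcD a0 a1 a2 a3 (N + 1) = 0 := by
          simp only [rcD]; rw [hN]; push_cast; ring
        rw [d0] at this
        simpa [hA (N + 1)] using this
      | succ k ih =>
        refine ⟨ih.2, ?_⟩
        have := r2 (N + 1 + k)
        have i1 : eval E (heunC e1 e2 e3 a0 a1 a2 a3 (N + 1 + k)) = 0 := ih.1
        have i2 : eval E (heunC e1 e2 e3 a0 a1 a2 a3 (N + 1 + k + 1)) = 0 := ih.2
        rw [i1, i2] at this
        have this2 : eval E (heunC e1 e2 e3 a0 a1 a2 a3 (N + 1 + k + 2)) = 0 := by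
          simpa [hA (N + 1 + k + 1)] using this
        exact this2
    set P : ℝ[X] := ∑ m ∈ Finset.range (N + 1), C (c m) * X ^ m with hP
    have hPc : ∀ m, P.coeff m = c m := by
      intro m
      rw [hP, finsetSum_coeff]
      simp only [coeff_C_mul, coeff_X_pow, mul_ite, mul_one, mul_zero, Finset.sum_ite_eq,
        Finset.mem_range]
      split_ifs with hm
      · rfl
      · obtain ⟨k, rfl⟩ : ∃ k, m = N + 1 + k := ⟨m - (N + 1), by omega⟩
        exact (hz k).1.symm
    have ht : taylor e3 (taylor (-e3) P) = P := by
      rw [taylor_taylor]; simp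
    refine ⟨taylor (-e3) P, ?_, ?_, ?_⟩
    · intro h0
      rw [h0] at ht
      have := hPc 0
      rw [← ht] at this
      simp [hc, r0] at this
    · rw [natDegree_taylor]
      rw [natDegree_le_iff_coeff_eq_zero]
      intro m hm
      rw [hPc]
      obtain ⟨k, rfl⟩ : ∃ k, m = N + 1 + k := ⟨m - (N + 1), by omega⟩
      exact (hz k).1
    · rw [HODE_iff, ht]
      simp only [hPc]
      refine ⟨?_, r2⟩
      simp only [hc, r0]
      linear_combination r1
  · rintro ⟨p, hp, hdeg, hode⟩
    rw [HODE_iff] at hode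
    obtain ⟨o1, o2⟩ := hode
    set u := taylor e3 p with hu
    have hk : ∀ m, u.coeff m = u.coeff 0 * c m ∧ u.coeff (m + 1) = u.coeff 0 * c (m + 1) := by
      intro m
      induction m with
      | zero =>
        refine ⟨by simp [hc, r0], ?_⟩
        apply mul_left_cancel₀ (hA 0)
        linear_combination o1 - u.coeff 0 * r1
      | succ m ih =>
        refine ⟨ih.2, ?_⟩
        apply mul_left_cancel₀ (hA (m + 1))
        have i1 := ih.1
        have i2 := ih.2
        simp only [hc] at i1 i2 ⊢
        have o := o2 m
        rw [i1, i2] at o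
        linear_combination o - u.coeff 0 * r2 m
    have hu0 : u.coeff 0 ≠ 0 := by
      intro h0
      apply hp
      apply taylor_injective e3
      rw [← hu, map_zero]
      ext m
      rw [(hk m).1, h0]; simp
    have h3 := (hk N).2
    rw [coeff_eq_zero_of_natDegree_lt (by rw [hu, natDegree_taylor]; omega)] at h3
    exact (mul_eq_zero.1 h3.symm).resolve_left hu0

theorem mult_lemma (e δ : ℝ) (p1 p2 U V : ℝ[X]) (hp1 : p1 ≠ 0) (hp2 : p2 ≠ 0)
    (hU : U.eval e ≠ 0)
    (h : (X - C e) * U * (p1 * derivative p2 - derivative p1 * p2)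
      + (C δ * U + (X - C e) * V) * (p1 * p2) = 0) : ∃ n : ℤ, δ = n := by
  obtain ⟨r1, h1, hr1, hh1⟩ : ∃ (r : ℕ) (q : ℝ[X]), p1 = (X - C e) ^ r * q ∧ q.eval e ≠ 0 := by
    obtain ⟨q, hq, hn⟩ := exists_eq_pow_rootMultiplicity_mul_and_not_dvd p1 hp1 e
    exact ⟨_, q, hq, fun hz => hn (dvd_iff_isRoot.2 hz)⟩
  obtain ⟨r2, h2, hr2, hh2⟩ : ∃ (r : ℕ) (q : ℝ[X]), p2 = (X - C e) ^ r * q ∧ q.eval e ≠ 0 := by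
    obtain ⟨q, hq, hn⟩ := exists_eq_pow_rootMultiplicity_mul_and_not_dvd p2 hp2 e
    exact ⟨_, q, hq, fun hz => hn (dvd_iff_isRoot.2 hz)⟩
  have hd : ∀ (r : ℕ) (q : ℝ[X]), (X - C e) * derivative ((X - C e) ^ r * q) =
      (X - C e) ^ r * ((r : ℝ[X]) * q + (X - C e) * derivative q) := by
    intro r q
    rw [derivative_mul]
    cases r with
    | zero => simp
    | succ r =>
      rw [derivative_X_sub_C_pow]
      simp only [Nat.add_sub_cancel]
      push_cast
      simp only [C_add, C_1, map_natCast]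
      ring
  have d1 := hd r1 h1
  have d2 := hd r2 h2
  rw [← hr1] at d1
  rw [← hr2] at d2
  have hx : (X - C e : ℝ[X]) ≠ 0 := X_sub_C_ne_zero e
  have key : (X - C e) ^ (r1 + r2) * (U * (h1 * ((r2 : ℝ[X]) * h2 + (X - C e) * derivative h2)
      - ((r1 : ℝ[X]) * h1 + (X - C e) * derivative h1) * h2)
      + (C δ * U + (X - C e) * V) * (h1 * h2)) = 0 := by
    rw [← h, pow_add]
    have : (X - C e) * U * (p1 * derivative p2 - derivative p1 * p2) =
      U * (p1 * ((X - C e) * derivative p2) - ((X - C e) * derivative p1) * p2) := by ring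
    rw [this, d1, d2, hr1, hr2]
    ring
  have key2 := (mul_eq_zero.1 key).resolve_left (pow_ne_zero _ hx)
  have key3 := congrArg (eval e) key2
  simp at key3
  have key4 : U.eval e * h1.eval e * h2.eval e * ((r2 : ℝ) - r1 + δ) = 0 := by
    linear_combination key3
  have key5 := (mul_eq_zero.1 key4).resolve_left (by positivity)
  exact ⟨(r1 : ℤ) - r2, by push_cast; linear_combination key5⟩

/-- half-integrality excludes integrality -/
theorem half_not_int (n : ℤ) (x : ℝ) (hx : x = n + 1 / 2) : ¬ ∃ k : ℤ, x = k := by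
  rintro ⟨k, hk⟩
  have h : (2 * n + 1 : ℝ) = 2 * k := by linarith
  have h' : 2 * n + 1 = 2 * k := by exact_mod_cast h
  omega

theorem no_common_12 (e1 e2 e3 a0 a1 a2 a3 E : ℝ) (h12 : e1 ≠ e2)
    (h1 : ∃ n : ℤ, 2 * a1 = n) (h3 : ∃ n : ℤ, 2 * a3 = n) (p1 p2 : ℝ[X])
    (hp1 : p1 ≠ 0) (hp2 : p2 ≠ 0) (o1 : HODE e1 e2 e3 a0 a1 a2 a3 E p1)
    (o2 : HODE e1 e2 e3 a0 (1 / 2 - a1) (1 / 2 - a2) a3 E p2) : False := by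
  obtain ⟨n1, h1⟩ := h1
  obtain ⟨n3, h3⟩ := h3
  unfold HODE at o1 o2
  set G : ℝ[X] := (X - C e1) * (X - C e2) * (p1 * derivative p2 - derivative p1 * p2)
    + (C (1 / 2 - 2 * a1) * (X - C e2) + C (1 / 2 - 2 * a2) * (X - C e1)) * (p1 * p2) with hG
  have q2 : (C (2 : ℝ) : ℝ[X]) = 2 := rfl
  have q3 : (1 : ℝ[X]) = 2 * C (1 / 2) := by
    rw [← q2, ← C_mul]; norm_num
  have hG0 : G = 0 := by
    by_contra hne
    have hode : (X - C e3) * 1 * (1 * derivative G - derivative 1 * G)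
        + (C (2 * a3 + 1 / 2) * 1 + (X - C e3) * 0) * (1 * G) = 0 := by
      rw [hG]
      simp only [derivative_mul, derivative_sub, derivative_add, derivative_C, derivative_X,
        derivative_one]
      simp only [C_add, C_sub, C_mul, C_neg, C_pow, q2] at o1 o2 ⊢
      linear_combination p1 * o2 - p2 * o1
        + (X - C e3) * ((2 * X - C e1 - C e2) * (p1 * derivative p2 - derivative p1 * p2)
          + (2 * C (1 / 2) - 2 * C a1 - 2 * C a2) * (p1 * p2)) * q3
    obtain ⟨k, hk⟩ := mult_lemma e3 (2 * a3 + 1 / 2) 1 G 1 0 one_ne_zero hne (by simp) hode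
    exact half_not_int n3 (2 * a3 + 1 / 2) (by rw [h3]) ⟨k, hk⟩
  have := mult_lemma e1 (1 / 2 - 2 * a1) p1 p2 (X - C e2) (C (1 / 2 - 2 * a2)) hp1 hp2
    (by simpa using sub_ne_zero.2 h12) (by rw [hG] at hG0; linear_combination hG0)
  exact half_not_int (-n1) (1 / 2 - 2 * a1) (by rw [h1]; push_cast; ring) this

theorem no_common_01 (e1 e2 e3 a0 a1 a2 a3 E : ℝ) (h23 : e2 ≠ e3)
    (h1 : ∃ n : ℤ, 2 * a1 = n) (h3 : ∃ n : ℤ, 2 * a3 = n) (p1 p2 : ℝ[X])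
    (hp1 : p1 ≠ 0) (hp2 : p2 ≠ 0) (o1 : HODE e1 e2 e3 a0 a1 a2 a3 E p1)
    (o2 : HODE e1 e2 e3 (1 / 2 - a0) (1 / 2 - a1) a2 a3 E p2) : False := by
  obtain ⟨n1, h1⟩ := h1
  obtain ⟨n3, h3⟩ := h3
  unfold HODE at o1 o2
  set G : ℝ[X] := (X - C e1) * (p1 * derivative p2 - derivative p1 * p2)
    + C (1 / 2 - 2 * a1) * (p1 * p2) with hG
  have q2 : (C (2 : ℝ) : ℝ[X]) = 2 := rfl
  have q3 : (1 : ℝ[X]) = 2 * C (1 / 2) := by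
    rw [← q2, ← C_mul]; norm_num
  have hG0 : G = 0 := by
    by_contra hne
    have hode : (X - C e3) * (X - C e2) * (1 * derivative G - derivative 1 * G)
        + (C (2 * a3 + 1 / 2) * (X - C e2) + (X - C e3) * C (2 * a2 + 1 / 2)) * (1 * G) = 0 := by
      rw [hG]
      simp only [derivative_mul, derivative_sub, derivative_add, derivative_C, derivative_X,
        derivative_one]
      simp only [C_add, C_sub, C_mul, C_neg, C_pow, q2] at o1 o2 ⊢
      linear_combination p1 * o2 - p2 * o1
        + (X - C e2) * (X - C e3) * (p1 * derivative p2 - derivative p1 * p2) * q3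
    obtain ⟨k, hk⟩ := mult_lemma e3 (2 * a3 + 1 / 2) 1 G (X - C e2) (C (2 * a2 + 1 / 2))
      one_ne_zero hne (by simpa using sub_ne_zero.2 h23.symm) hode
    exact half_not_int n3 (2 * a3 + 1 / 2) (by rw [h3]) ⟨k, hk⟩
  have := mult_lemma e1 (1 / 2 - 2 * a1) p1 p2 1 0 hp1 hp2
    (by simp) (by rw [hG] at hG0; linear_combination hG0)
  exact half_not_int (-n1) (1 / 2 - 2 * a1) (by rw [h1]; push_cast; ring) this

theorem HODE_swap12 (e1 e2 e3 a0 a1 a2 a3 E : ℝ) (p : ℝ[X])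
    (h : HODE e1 e2 e3 a0 a1 a2 a3 E p) : HODE e2 e1 e3 a0 a2 a1 a3 E p := by
  unfold HODE at h ⊢
  rw [← h]
  simp only [C_add, C_sub, C_mul, C_neg, C_pow]
  ring

theorem HODE_swap13 (e1 e2 e3 a0 a1 a2 a3 E : ℝ) (p : ℝ[X])
    (h : HODE e1 e2 e3 a0 a1 a2 a3 E p) : HODE e3 e2 e1 a0 a3 a2 a1 E p := by
  unfold HODE at h ⊢
  rw [← h]
  simp only [C_add, C_sub, C_mul, C_neg, C_pow]
  ring

theorem HODE_swap23 (e1 e2 e3 a0 a1 a2 a3 E : ℝ) (p : ℝ[X])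
    (h : HODE e1 e2 e3 a0 a1 a2 a3 E p) : HODE e1 e3 e2 a0 a1 a3 a2 E p := by
  unfold HODE at h ⊢
  rw [← h]
  simp only [C_add, C_sub, C_mul, C_neg, C_pow]
  ring

theorem half_ne (a : ℝ) (h : ∃ n : ℤ, 2 * a = n) (m : ℕ) : (m : ℝ) + (2 * a + 1 / 2) ≠ 0 := by
  obtain ⟨n, hn⟩ := h
  intro hz
  exact half_not_int n (2 * a + 1 / 2) (by rw [hn]) ⟨-m, by push_cast; linarith⟩

theorem heunC_swap12 (e1 e2 e3 a0 a1 a2 a3 : ℝ) (m : ℕ) :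
    heunC e1 e2 e3 a0 a1 a2 a3 m = heunC e2 e1 e3 a0 a2 a1 a3 m := by
  have hq : heunQE e1 e2 e3 a0 a1 a2 a3 = heunQE e2 e1 e3 a0 a2 a1 a3 := by
    unfold heunQE; congr 2; ring
  have key : ∀ m, heunC e1 e2 e3 a0 a1 a2 a3 m = heunC e2 e1 e3 a0 a2 a1 a3 m ∧
      heunC e1 e2 e3 a0 a1 a2 a3 (m + 1) = heunC e2 e1 e3 a0 a2 a1 a3 (m + 1) := by
    intro m
    induction m with
    | zero =>
      refine ⟨rfl, ?_⟩
      simp only [heunC]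
      rw [hq]; congr 3; ring
    | succ m ih =>
      refine ⟨ih.2, ?_⟩
      rw [heunC, heunC, ih.1, ih.2, hq]
      congr 1
      · congr 2; ring
      · congr 1
        · congr 2; ring
        · congr 3; ring
  exact (key m).1

theorem heunC_good (e1 e2 e3 a0 a1 a2 a3 : ℝ) (N : ℕ) (hA : (e1 - e3) * (e2 - e3) < 0)
    (hg : ∃ n : ℤ, 2 * a3 = n) (hN : a0 + a1 + a2 + a3 = -N)
    (hs : ∀ m : ℕ, m < N →
      0 < ((m : ℝ) + (2 * a3 + 1 / 2)) * ((m : ℝ) + (-a0 + 1 / 2 + a1 + a2 + a3))) :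
    GoodPoly (heunC e1 e2 e3 a0 a1 a2 a3 (N + 1)) := by
  have h1 : e1 ≠ e3 := by rintro rfl; simp at hA
  have h2 : e2 ≠ e3 := by rintro rfl; simp at hA
  have hne := rcA_ne e1 e2 e3 a3 h1 h2 (half_ne a3 hg)
  apply rec_good (heunC e1 e2 e3 a0 a1 a2 a3) (rcA e1 e2 e3 a3) (rcB e1 e2 e3 a0 a1 a2 a3)
    (rcD a0 a1 a2 a3) N (by simp [heunC]) (heunC_one _ _ _ _ _ _ _ (hne 0))
    (fun m => heunC_rec _ _ _ _ _ _ _ m (hne _)) hne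
  intro m hm
  have h := hs m hm
  have e : rcA e1 e2 e3 a3 m * rcD a0 a1 a2 a3 (m + 1) =
      (-((e1 - e3) * (e2 - e3))) * ((m : ℝ) + 1) * ((N : ℝ) - m) *
      (((m : ℝ) + (2 * a3 + 1 / 2)) * ((m : ℝ) + (-a0 + 1 / 2 + a1 + a2 + a3))) := by
    simp only [rcA, rcD]; rw [hN]; push_cast; ring
  rw [e]
  have : 0 < (N : ℝ) - m := by
    have : (m : ℝ) < N := by exact_mod_cast hm
    linarith
  have : 0 < -((e1 - e3) * (e2 - e3)) := by linarith
  positivity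

theorem heunC_natDegree (e1 e2 e3 a0 a1 a2 a3 : ℝ) (N : ℕ) (h1 : e1 ≠ e3) (h2 : e2 ≠ e3)
    (hg : ∃ n : ℤ, 2 * a3 = n) : (heunC e1 e2 e3 a0 a1 a2 a3 N).natDegree = N ∧
      heunC e1 e2 e3 a0 a1 a2 a3 N ≠ 0 := by
  have hne := rcA_ne e1 e2 e3 a3 h1 h2 (half_ne a3 hg)
  have h := rec_coeff (heunC e1 e2 e3 a0 a1 a2 a3) (rcA e1 e2 e3 a3) (rcB e1 e2 e3 a0 a1 a2 a3)
    (rcD a0 a1 a2 a3) (by simp [heunC]) (heunC_one _ _ _ _ _ _ _ (hne 0))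
    (fun m => heunC_rec _ _ _ _ _ _ _ m (hne _)) hne
  exact ⟨rec_natDegree _ h N, fun h0 => (h N).2 (by rw [h0]; simp)⟩

theorem aux_map_eval (p : ℝ[X]) (x : ℝ) : (p.map (algebraMap ℝ ℂ)).eval (x : ℂ) = (p.eval x : ℝ) := by
  exact eval_map_apply (f := algebraMap ℝ ℂ) (p := p) x

theorem good_transfer (p q : ℝ[X]) (hp : GoodPoly p) (hq : q ≠ 0) (hd : q.natDegree = p.natDegree)
    (h : ∀ x : ℝ, p.eval x = 0 → q.eval x = 0) : GoodPoly q := by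
  obtain ⟨g1, g2, g3⟩ := hp
  have hmap : q.map (algebraMap ℝ ℂ) ≠ 0 :=
    (Polynomial.map_ne_zero_iff (algebraMap ℝ ℂ).injective).2 hq
  have hle : (p.map (algebraMap ℝ ℂ)).roots ≤ (q.map (algebraMap ℝ ℂ)).roots := by
    rw [Multiset.le_iff_subset g2]
    intro z hz
    obtain ⟨x, rfl⟩ : ∃ x : ℝ, z = x := ⟨z.re, Complex.ext rfl (by simpa using g3 z hz)⟩
    rw [mem_roots g1, IsRoot.def, aux_map_eval] at hz
    rw [mem_roots hmap, IsRoot.def, aux_map_eval, h x (by exact_mod_cast hz)]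
    simp
  have heq := Multiset.eq_of_le_of_card_le hle (by
    rw [IsAlgClosed.card_roots_eq_natDegree, IsAlgClosed.card_roots_eq_natDegree, natDegree_map, natDegree_map, hd])
  refine ⟨hmap, ?_, ?_⟩
  · rw [← heq]; exact g2
  · rw [← heq]; exact g3

/-- swapping `γ` and `β` does not change the characteristic polynomial (expansion at `e3`). -/
theorem heunC_flip (e1 e2 e3 a0 a1 a2 a3 t : ℝ) (ht : 2 * t = -a0 - a3 + a1 + a2)
    (h1 : e1 ≠ e3) (h2 : e2 ≠ e3) (hg : ∃ n : ℤ, 2 * a3 = n) (hg' : ∃ n : ℤ, 2 * (a3 + t) = n) :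
    ∀ m, ∃ r : ℝ, r ≠ 0 ∧ heunC e1 e2 e3 (a0 + t) (a1 - t) (a2 - t) (a3 + t) m
      = C r * heunC e1 e2 e3 a0 a1 a2 a3 m := by
  have n1 := rcA_ne e1 e2 e3 a3 h1 h2 (half_ne a3 hg)
  have n2 := rcA_ne e1 e2 e3 (a3 + t) h1 h2 (half_ne _ hg')
  obtain ⟨ρ, hρ0, hρ⟩ : ∃ ρ : ℕ → ℝ, ρ 0 = 1 ∧ ∀ m, ρ (m + 1) =
      ρ m * (((m : ℝ) + (2 * a3 + 1 / 2)) / ((m : ℝ) + (2 * (a3 + t) + 1 / 2))) :=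
    ⟨fun m => ∏ j ∈ Finset.range m, (((j : ℝ) + (2 * a3 + 1 / 2)) /
      ((j : ℝ) + (2 * (a3 + t) + 1 / 2))), by simp, fun m => Finset.prod_range_succ _ _⟩
  have hρn : ∀ m, ρ m ≠ 0 := by
    intro m
    induction m with
    | zero => simp [hρ0]
    | succ m ih =>
      rw [hρ]
      exact mul_ne_zero ih (div_ne_zero (half_ne a3 hg m) (half_ne _ hg' m))
  have hρ' : ∀ m, ρ (m + 1) * ((m : ℝ) + (2 * (a3 + t) + 1 / 2)) =
      ρ m * ((m : ℝ) + (2 * a3 + 1 / 2)) := by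
    intro m
    have := half_ne _ hg' m
    rw [hρ, mul_assoc, div_mul_cancel₀ _ this]
  have hA : ∀ m, rcA e1 e2 e3 (a3 + t) m * ρ (m + 1) = ρ m * rcA e1 e2 e3 a3 m := by
    intro m
    simp only [rcA]
    linear_combination (e1 - e3) * (e2 - e3) * ((m : ℝ) + 1) * hρ' m
  have hB : ∀ m, rcB e1 e2 e3 (a0 + t) (a1 - t) (a2 - t) (a3 + t) m =
      rcB e1 e2 e3 a0 a1 a2 a3 m := by
    intro m
    obtain rfl : a0 = -a3 + a1 + a2 - 2 * t := by linarith
    simp only [rcB]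
    ring
  have hD : ∀ m, rcD (a0 + t) (a1 - t) (a2 - t) (a3 + t) (m + 1) * ρ m =
      ρ (m + 1) * rcD a0 a1 a2 a3 (m + 1) := by
    intro m
    obtain rfl : a0 = -a3 + a1 + a2 - 2 * t := by linarith
    simp only [rcD]
    push_cast
    linear_combination - ((m : ℝ) + (2 * a1 + 2 * a2 - 2 * t)) * hρ' m
  have key : ∀ m, heunC e1 e2 e3 (a0 + t) (a1 - t) (a2 - t) (a3 + t) m
      = C (ρ m) * heunC e1 e2 e3 a0 a1 a2 a3 m ∧
      heunC e1 e2 e3 (a0 + t) (a1 - t) (a2 - t) (a3 + t) (m + 1)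
      = C (ρ (m + 1)) * heunC e1 e2 e3 a0 a1 a2 a3 (m + 1) := by
    intro m
    induction m with
    | zero =>
      refine ⟨by simp [heunC, hρ0], ?_⟩
      apply mul_left_cancel₀ (C_ne_zero.2 (n2 0))
      rw [zero_add, heunC_one _ _ _ _ _ _ _ (n2 0), ← mul_assoc, ← C_mul]
      have := hA 0
      rw [zero_add] at this
      rw [this, hρ0, one_mul, heunC_one _ _ _ _ _ _ _ (n1 0), hB]
    | succ m ih =>
      refine ⟨ih.2, ?_⟩
      apply mul_left_cancel₀ (C_ne_zero.2 (n2 (m + 1)))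
      rw [heunC_rec _ _ _ _ _ _ _ _ (n2 (m + 1)), ← mul_assoc (C _) (C _), ← C_mul, hA (m + 1),
        C_mul, mul_assoc (C _) (C _), heunC_rec _ _ _ _ _ _ _ _ (n1 (m + 1)), ih.1, ih.2, hB]
      have := congrArg (C : ℝ → ℝ[X]) (hD m)
      simp only [C_mul] at this
      linear_combination - heunC e1 e2 e3 a0 a1 a2 a3 m * this
  exact fun m => ⟨ρ m, hρn m, (key m).1⟩

/-- Good polynomials through the transformation at `e1`. -/
theorem heunC_good_flip (e1 e2 e3 a0 a1 a2 a3 t : ℝ) (N : ℕ) (ht : 2 * t = -a0 - a1 + a2 + a3)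
    (hA : (e1 - e3) * (e2 - e3) < 0)
    (hg1 : ∃ n : ℤ, 2 * a1 = n) (hg3 : ∃ n : ℤ, 2 * a3 = n) (hgt : ∃ n : ℤ, 2 * t = n)
    (hN : a0 + a1 + a2 + a3 = -N)
    (h : GoodPoly (heunC e1 e2 e3 (a0 + t) (a1 + t) (a2 - t) (a3 - t) (N + 1))) :
    GoodPoly (heunC e1 e2 e3 a0 a1 a2 a3 (N + 1)) := by
  have h1 : e1 ≠ e3 := by rintro rfl; simp at hA
  have h2 : e2 ≠ e3 := by rintro rfl; simp at hA
  have h12 : e2 ≠ e1 := by rintro rfl; nlinarith [sq_nonneg (e2 - e3)]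
  have hg1t : ∃ n : ℤ, 2 * (a1 + t) = n := by
    obtain ⟨n, hn⟩ := hg1; obtain ⟨k, hk⟩ := hgt
    exact ⟨n + k, by push_cast; linarith⟩
  have hg3t : ∃ n : ℤ, 2 * (a3 - t) = n := by
    obtain ⟨n, hn⟩ := hg3; obtain ⟨k, hk⟩ := hgt
    exact ⟨n - k, by push_cast; linarith⟩
  obtain ⟨d1, z1⟩ := heunC_natDegree e1 e2 e3 a0 a1 a2 a3 (N + 1) h1 h2 hg3
  obtain ⟨d2, z2⟩ := heunC_natDegree e1 e2 e3 (a0 + t) (a1 + t) (a2 - t) (a3 - t) (N + 1) h1 h2 hg3t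
  refine good_transfer _ _ h z1 (by rw [d1, d2]) ?_
  intro E hE
  rw [heunC_root_iff _ _ _ _ _ _ _ N E h1 h2 (half_ne _ hg3t) (by linarith)] at hE
  rw [heunC_root_iff _ _ _ _ _ _ _ N E h1 h2 (half_ne _ hg3) hN]
  obtain ⟨p, hp, hpd, ho⟩ := hE
  have hE : HSol e3 e2 e1 (a0 + t) (a3 - t) (a2 - t) (a1 + t) N E := ⟨p, hp, hpd, HODE_swap13 _ _ _ _ _ _ _ _ _ ho⟩
  rw [← heunC_root_iff _ _ _ _ _ _ _ N E h1.symm h12 (half_ne _ hg1t) (by linarith)] at hE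
  obtain ⟨r, hr, hre⟩ := heunC_flip e3 e2 e1 a0 a3 a2 a1 t (by linarith) h1.symm h12 hg1 hg1t (N + 1)
  rw [hre, eval_mul, eval_C] at hE
  have hE2 := (mul_eq_zero.1 hE).resolve_left hr
  rw [heunC_root_iff _ _ _ _ _ _ _ N E h1.symm h12 (half_ne _ hg1) (by linarith)] at hE2
  obtain ⟨p, hp, hpd, ho⟩ := hE2
  exact ⟨p, hp, hpd, HODE_swap13 _ _ _ _ _ _ _ _ _ ho⟩

theorem good_C_mul (k : ℝ) (hk : k ≠ 0) (p : ℝ[X]) (hp : GoodPoly p) : GoodPoly (C k * p) := by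
  obtain ⟨g1, g2, g3⟩ := hp
  have hk' : (algebraMap ℝ ℂ k) ≠ 0 := by simpa using hk
  have e : ((C k * p).map (algebraMap ℝ ℂ)) = C (algebraMap ℝ ℂ k) * p.map (algebraMap ℝ ℂ) := by
    simp
  unfold GoodPoly
  rw [e, roots_C_mul _ hk']
  exact ⟨mul_ne_zero (C_ne_zero.2 hk') g1, g2, g3⟩

theorem good_one : GoodPoly 1 := by
  unfold GoodPoly
  simp

theorem good_mul (p q : ℝ[X]) (hp : GoodPoly p) (hq : GoodPoly q)
    (h : ∀ x : ℝ, p.eval x = 0 → q.eval x = 0 → False) : GoodPoly (p * q) := by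
  obtain ⟨g1, g2, g3⟩ := hp
  obtain ⟨k1, k2, k3⟩ := hq
  unfold GoodPoly
  rw [Polynomial.map_mul]
  have hne := mul_ne_zero g1 k1
  rw [roots_mul hne]
  refine ⟨hne, ?_, ?_⟩
  · rw [Multiset.nodup_add]
    refine ⟨g2, k2, ?_⟩
    rw [Multiset.disjoint_left]
    intro z hz hz'
    obtain ⟨x, rfl⟩ : ∃ x : ℝ, z = x := ⟨z.re, Complex.ext rfl (by simpa using g3 z hz)⟩
    rw [mem_roots g1, IsRoot.def, aux_map_eval] at hz
    rw [mem_roots k1, IsRoot.def, aux_map_eval] at hz'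
    exact h x (by exact_mod_cast hz) (by exact_mod_cast hz')
  · intro z hz
    rcases Multiset.mem_add.1 hz with hz | hz
    · exact g3 z hz
    · exact k3 z hz

theorem specP_good (e1 e2 e3 a0 a1 a2 a3 : ℝ) (N : ℕ)
    (h : GoodPoly (heunC e1 e2 e3 a0 a1 a2 a3 (N + 1))) :
    GoodPoly (specP e1 e2 e3 a0 a1 a2 a3 N) := by
  unfold specP
  apply good_C_mul _ _ _ h
  have : heunC e1 e2 e3 a0 a1 a2 a3 (N + 1) ≠ 0 := by
    intro h0
    apply h.1
    rw [h0]; simp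
  simpa using this

theorem heunC_good_pos (e1 e2 e3 a0 a1 a2 a3 : ℝ) (N : ℕ) (hA : (e1 - e3) * (e2 - e3) < 0)
    (hg : ∃ n : ℤ, 2 * a3 = n) (hN : a0 + a1 + a2 + a3 = -N)
    (hc : 0 < 2 * a3 + 1 / 2) (hb : 0 < -a0 + 1 / 2 + a1 + a2 + a3) :
    GoodPoly (heunC e1 e2 e3 a0 a1 a2 a3 (N + 1)) := by
  apply heunC_good _ _ _ _ _ _ _ _ hA hg hN
  intro m _
  positivity

theorem specP_good_pos (e1 e2 e3 a0 a1 a2 a3 : ℝ) (N : ℕ) (hA : (e1 - e3) * (e2 - e3) < 0)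
    (hg : ∃ n : ℤ, 2 * a3 = n) (hN : a0 + a1 + a2 + a3 = -N)
    (hc : 0 < 2 * a3 + 1 / 2) (hb : 0 < -a0 + 1 / 2 + a1 + a2 + a3) :
    GoodPoly (specP e1 e2 e3 a0 a1 a2 a3 N) :=
  specP_good _ _ _ _ _ _ _ _ (heunC_good_pos _ _ _ _ _ _ _ _ hA hg hN hc hb)

theorem specP_good_neg (e1 e2 e3 a0 a1 a2 a3 : ℝ) (N : ℕ) (hA : (e1 - e3) * (e2 - e3) < 0)
    (hg : ∃ n : ℤ, 2 * a3 = n) (hN : a0 + a1 + a2 + a3 = -N)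
    (hc : (N : ℝ) - 1 + (2 * a3 + 1 / 2) < 0)
    (hb : (N : ℝ) - 1 + (-a0 + 1 / 2 + a1 + a2 + a3) < 0) :
    GoodPoly (specP e1 e2 e3 a0 a1 a2 a3 N) := by
  apply specP_good
  apply heunC_good _ _ _ _ _ _ _ _ hA hg hN
  intro m hm
  have : (m : ℝ) + 1 ≤ N := by exact_mod_cast hm
  apply mul_pos_of_neg_of_neg <;> linarith

theorem specP_good_zero (e1 e2 e3 a0 a1 a2 a3 : ℝ) (N : ℕ) (hA : (e1 - e3) * (e2 - e3) < 0)
    (hg : ∃ n : ℤ, 2 * a3 = n) (hN : a0 + a1 + a2 + a3 = -N) (h0 : N = 0) :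
    GoodPoly (specP e1 e2 e3 a0 a1 a2 a3 N) := by
  apply specP_good
  apply heunC_good _ _ _ _ _ _ _ _ hA hg hN
  intro m hm
  omega

theorem specP_good_flip (e1 e2 e3 a0 a1 a2 a3 t : ℝ) (N : ℕ) (ht : 2 * t = -a0 - a1 + a2 + a3)
    (hA : (e1 - e3) * (e2 - e3) < 0)
    (hg1 : ∃ n : ℤ, 2 * a1 = n) (hg3 : ∃ n : ℤ, 2 * a3 = n) (hgt : ∃ n : ℤ, 2 * t = n)
    (hN : a0 + a1 + a2 + a3 = -N)
    (hc : 0 < 2 * (a3 - t) + 1 / 2) (hb : 0 < 2 * a1 + 1 / 2) :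
    GoodPoly (specP e1 e2 e3 a0 a1 a2 a3 N) := by
  apply specP_good
  apply heunC_good_flip _ _ _ _ _ _ _ t _ ht hA hg1 hg3 hgt hN
  apply heunC_good_pos _ _ _ _ _ _ _ _ hA _ (by linarith) hc (by linarith)
  obtain ⟨n, hn⟩ := hg3; obtain ⟨k, hk⟩ := hgt
  exact ⟨n - k, by push_cast; linarith⟩

theorem int_neg (l : ℕ) : ∃ n : ℤ, 2 * (-(l : ℝ) / 2) = n := ⟨-(l : ℤ), by push_cast; ring⟩
theorem int_pos (l : ℕ) : ∃ n : ℤ, 2 * (((l : ℝ) + 1) / 2) = n := ⟨(l : ℤ) + 1, by push_cast; ring⟩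

/-- The hypothesis of the theorem. -/
def LCond (l0 l1 l2 l3 : ℕ) : Prop := (l3 = 0 ∧ l1 + l2 ≤ l0 + 1) ∨
      (l0 + l3 + 1 = l1 + l2 ∧ l0 + l1 + 1 ≤ l2 + l3 ∧ l0 + l2 + 1 ≤ l1 + l3) ∨
      (l0 + l3 = l1 + l2 + 1 ∧ l2 + l3 + 1 ≤ l0 + l1 ∧ l1 + l3 + 1 ≤ l0 + l2)

theorem good_P0 (e1 e2 e3 : ℝ) (hA : (e1 - e3) * (e2 - e3) < 0) (l0 l1 l2 l3 : ℕ)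
    (h : LCond l0 l1 l2 l3) : GoodPoly (specP0 e1 e2 e3 l0 l1 l2 l3) := by
  unfold specP0
  unfold LCond at h
  split_ifs with c1 c2 c3
  · obtain ⟨N, hN⟩ : ∃ N, N = (l0 + l1 + l2 + l3) / 2 := ⟨_, rfl⟩
    rw [← hN]
    have hN' : 2 * N = l0 + l1 + l2 + l3 := by omega
    have i1 : l3 = 0 := by omega
    have i2 : l1 + l2 ≤ l0 := by omega
    have r1 : (2 * N : ℝ) = l0 + l1 + l2 + l3 := by exact_mod_cast hN'
    have r2 : (l3 : ℝ) = 0 := by exact_mod_cast i1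
    have r3 : (l1 + l2 : ℝ) ≤ l0 := by exact_mod_cast i2
    apply specP_good_pos _ _ _ _ _ _ _ _ hA (int_neg l3) <;> linarith
  · obtain ⟨N, hN⟩ : ∃ N, N = (l0 - l1 - l2 - l3 - 3) / 2 := ⟨_, rfl⟩
    rw [← hN]
    have hN' : 2 * N + 3 + l1 + l2 + l3 = l0 := by omega
    have r1 : (2 * N + 3 + l1 + l2 + l3 : ℝ) = l0 := by exact_mod_cast hN'
    have p0 : (0 : ℝ) ≤ l0 := by positivity
    have p1 : (0 : ℝ) ≤ l1 := by positivity
    have p2 : (0 : ℝ) ≤ l2 := by positivity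
    have p3 : (0 : ℝ) ≤ l3 := by positivity
    apply specP_good_pos _ _ _ _ _ _ _ _ hA (int_pos l3) <;> linarith
  · exact good_one
  · obtain ⟨N, hN⟩ : ∃ N, N = (l1 + l2 + l3 - l0 - 1) / 2 := ⟨_, rfl⟩
    rw [← hN]
    have hN' : 2 * N + 1 + l0 = l1 + l2 + l3 := by omega
    have r1 : (2 * N + 1 + l0 : ℝ) = l1 + l2 + l3 := by exact_mod_cast hN'
    have p0 : (0 : ℝ) ≤ l0 := by positivity
    have pN : (0 : ℝ) ≤ N := by positivity
    rcases h with h | h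
    · exact specP_good_zero _ _ _ _ _ _ _ _ hA (int_neg l3) (by linarith) (by omega)
    · have i1 : N ≤ l3 := by omega
      have r2 : (N : ℝ) ≤ l3 := by exact_mod_cast i1
      apply specP_good_neg _ _ _ _ _ _ _ _ hA (int_neg l3) <;> linarith

theorem good_P3 (e1 e2 e3 : ℝ) (hA : (e1 - e3) * (e2 - e3) < 0) (l0 l1 l2 l3 : ℕ)
    (h : LCond l0 l1 l2 l3) : GoodPoly (specP3 e1 e2 e3 l0 l1 l2 l3) := by
  unfold specP3
  unfold LCond at h
  have p0 : (0 : ℝ) ≤ l0 := by positivity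
  have p1 : (0 : ℝ) ≤ l1 := by positivity
  have p2 : (0 : ℝ) ≤ l2 := by positivity
  have p3 : (0 : ℝ) ≤ l3 := by positivity
  split_ifs with c1 c2 c3 c4 c5
  · obtain ⟨N, hN⟩ : ∃ N, N = (l0 + l3 - l1 - l2) / 2 - 1 := ⟨_, rfl⟩
    rw [← hN]
    have hN' : 2 * N + 2 + l1 + l2 = l0 + l3 := by omega
    have i1 : l3 = 0 := by omega
    have r1 : (2 * N + 2 + l1 + l2 : ℝ) = l0 + l3 := by exact_mod_cast hN'
    have r2 : (l3 : ℝ) = 0 := by exact_mod_cast i1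
    apply specP_good_pos _ _ _ _ _ _ _ _ hA (int_neg l3) <;> linarith
  · exact good_one
  · omega
  · omega
  · exact good_one
  · obtain ⟨N, hN⟩ : ∃ N, N = (l0 + l1 + l2 - l3 - 1) / 2 := ⟨_, rfl⟩
    rw [← hN]
    have hN' : 2 * N + 1 + l3 = l0 + l1 + l2 := by omega
    have r1 : (2 * N + 1 + l3 : ℝ) = l0 + l1 + l2 := by exact_mod_cast hN'
    have i1 : l1 + l2 ≤ l0 + l3 + 1 := by omega
    have r2 : (l1 + l2 : ℝ) ≤ l0 + l3 + 1 := by exact_mod_cast i1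
    apply specP_good_pos _ _ _ _ _ _ _ _ hA (int_pos l3) <;> linarith

theorem good_P1 (e1 e2 e3 : ℝ) (hA : (e1 - e3) * (e2 - e3) < 0) (l0 l1 l2 l3 : ℕ)
    (h : LCond l0 l1 l2 l3) : GoodPoly (specP1 e1 e2 e3 l0 l1 l2 l3) := by
  unfold specP1
  unfold LCond at h
  have p0 : (0 : ℝ) ≤ l0 := by positivity
  have p1 : (0 : ℝ) ≤ l1 := by positivity
  have p2 : (0 : ℝ) ≤ l2 := by positivity
  have p3 : (0 : ℝ) ≤ l3 := by positivity
  split_ifs with c1 c2 c3 c4 c5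
  · obtain ⟨N, hN⟩ : ∃ N, N = (l0 + l1 - l2 - l3) / 2 - 1 := ⟨_, rfl⟩
    rw [← hN]
    have hN' : 2 * N + 2 + l2 + l3 = l0 + l1 := by omega
    have r1 : (2 * N + 2 + l2 + l3 : ℝ) = l0 + l1 := by exact_mod_cast hN'
    have i2 : l1 + l2 ≤ l0 := by omega
    have r3 : (l1 + l2 : ℝ) ≤ l0 := by exact_mod_cast i2
    apply specP_good_pos _ _ _ _ _ _ _ _ hA (int_pos l3) <;> linarith
  · exact good_one
  · omega
  · omega
  · exact good_one
  · obtain ⟨N, hN⟩ : ∃ N, N = (l0 + l2 + l3 - l1 - 1) / 2 := ⟨_, rfl⟩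
    rw [← hN]
    have hN' : 2 * N + 1 + l1 = l0 + l2 + l3 := by omega
    have r1 : (2 * N + 1 + l1 : ℝ) = l0 + l2 + l3 := by exact_mod_cast hN'
    rcases h with ⟨h1, h2⟩ | ⟨h1, h2, h3⟩ | ⟨h1, h2, h3⟩
    · have r2 : (l3 : ℝ) = 0 := by exact_mod_cast h1
      have r3 : (l1 + l2 : ℝ) ≤ l0 + 1 := by exact_mod_cast h2
      apply specP_good_pos _ _ _ _ _ _ _ _ hA (int_neg l3) <;> linarith
    · have r2 : (l0 + l3 + 1 : ℝ) = l1 + l2 := by exact_mod_cast h1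
      apply specP_good_flip _ _ _ _ _ _ _ (-((l3 : ℝ) + 1) / 2) _ _ hA (int_pos l1) (int_neg l3)
        ⟨-((l3 : ℤ) + 1), by push_cast; ring⟩ <;> linarith
    · have r2 : (l0 + l3 : ℝ) = l1 + l2 + 1 := by exact_mod_cast h1
      apply specP_good_flip _ _ _ _ _ _ _ (-(l3 : ℝ) / 2) _ _ hA (int_pos l1) (int_neg l3)
        (int_neg l3) <;> linarith

theorem specP_swap12 (e1 e2 e3 a0 a1 a2 a3 : ℝ) (N : ℕ) :
    specP e1 e2 e3 a0 a1 a2 a3 N = specP e2 e1 e3 a0 a2 a1 a3 N := by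
  unfold specP
  rw [heunC_swap12]

theorem specP2_swap (e1 e2 e3 : ℝ) (l0 l1 l2 l3 : ℕ) :
    specP2 e1 e2 e3 l0 l1 l2 l3 = specP1 e2 e1 e3 l0 l2 l1 l3 := by
  unfold specP2 specP1
  have : l0 + l2 + l1 + l3 = l0 + l1 + l2 + l3 := by omega
  rw [this]
  simp only [specP_swap12 e1 e2 e3]

theorem good_P2 (e1 e2 e3 : ℝ) (hA : (e1 - e3) * (e2 - e3) < 0) (l0 l1 l2 l3 : ℕ)
    (h : LCond l0 l1 l2 l3) : GoodPoly (specP2 e1 e2 e3 l0 l1 l2 l3) := by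
  rw [specP2_swap]
  apply good_P1 _ _ _ (by linarith)
  unfold LCond at h ⊢
  omega

/-- The two possible exponents. -/
noncomputable def aOf (b : Bool) (l : ℕ) : ℝ := if b then ((l : ℝ) + 1) / 2 else -(l : ℝ) / 2

theorem aOf_not (b : Bool) (l : ℕ) : aOf (!b) l = 1 / 2 - aOf b l := by
  cases b <;> simp [aOf] <;> ring

theorem aOf_int (b : Bool) (l : ℕ) : ∃ n : ℤ, 2 * aOf b l = n := by
  cases b
  · simpa [aOf] using int_neg l
  · simpa [aOf] using int_pos l

/-- `p` is trivial or a polynomial of the given type. -/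
def IsFac (e1 e2 e3 : ℝ) (l0 l1 l2 l3 : ℕ) (b0 b1 b2 b3 : Bool) (p : ℝ[X]) : Prop :=
  p = 1 ∨ ∃ N : ℕ, aOf b0 l0 + aOf b1 l1 + aOf b2 l2 + aOf b3 l3 = -N ∧
    p = specP e1 e2 e3 (aOf b0 l0) (aOf b1 l1) (aOf b2 l2) (aOf b3 l3) N

theorem IsFac_sol (e1 e2 e3 : ℝ) (h1 : e1 ≠ e3) (h2 : e2 ≠ e3) (l0 l1 l2 l3 : ℕ)
    (b0 b1 b2 b3 : Bool) (p : ℝ[X])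
    (hp : IsFac e1 e2 e3 l0 l1 l2 l3 b0 b1 b2 b3 p) (x : ℝ) (hx : p.eval x = 0) :
    ∃ q : ℝ[X], q ≠ 0 ∧ HODE e1 e2 e3 (aOf b0 l0) (aOf b1 l1) (aOf b2 l2) (aOf b3 l3) x q := by
  rcases hp with rfl | ⟨N, hN, rfl⟩
  · simp at hx
  · unfold specP at hx
    have hne := (heunC_natDegree e1 e2 e3 (aOf b0 l0) (aOf b1 l1) (aOf b2 l2) (aOf b3 l3) (N + 1)
      h1 h2 (aOf_int b3 l3)).2
    rw [eval_mul, eval_C] at hx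
    have hx' := (mul_eq_zero.1 hx).resolve_left (by simpa using hne)
    rw [heunC_root_iff _ _ _ _ _ _ _ N x h1 h2 (half_ne _ (aOf_int b3 l3)) hN] at hx'
    obtain ⟨q, hq, _, ho⟩ := hx'
    exact ⟨q, hq, ho⟩

theorem IsFac_coprime (e1 e2 e3 : ℝ) (h12 : e1 ≠ e2) (h13 : e1 ≠ e3) (h23 : e2 ≠ e3)
    (l0 l1 l2 l3 : ℕ) (b0 b1 b2 b3 c0 c1 c2 c3 : Bool) (p q : ℝ[X])
    (hbc : (b0 ^^ c0).toNat + (b1 ^^ c1).toNat + (b2 ^^ c2).toNat + (b3 ^^ c3).toNat = 2)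
    (hp : IsFac e1 e2 e3 l0 l1 l2 l3 b0 b1 b2 b3 p)
    (hq : IsFac e1 e2 e3 l0 l1 l2 l3 c0 c1 c2 c3 q) (x : ℝ) (hx : p.eval x = 0)
    (hy : q.eval x = 0) : False := by
  obtain ⟨u, hu, ou⟩ := IsFac_sol e1 e2 e3 h13 h23 _ _ _ _ _ _ _ _ p hp x hx
  obtain ⟨v, hv, ov⟩ := IsFac_sol e1 e2 e3 h13 h23 _ _ _ _ _ _ _ _ q hq x hy
  have i1 := aOf_int b1 l1
  have i2 := aOf_int b2 l2
  have i3 := aOf_int b3 l3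
  have hx : ∀ b c : Bool, c = b ∨ c = !b := by decide
  rcases hx b0 c0 with rfl | rfl <;> rcases hx b1 c1 with rfl | rfl <;>
    rcases hx b2 c2 with rfl | rfl <;> rcases hx b3 c3 with rfl | rfl <;>
    simp at hbc <;> simp only [aOf_not] at ov
  · exact no_common_12 e3 e2 e1 _ _ _ _ x h23.symm i3 i1 u v hu hv
      (HODE_swap13 _ _ _ _ _ _ _ _ _ ou) (HODE_swap13 _ _ _ _ _ _ _ _ _ ov)
  · exact no_common_12 e1 e3 e2 _ _ _ _ x h13 i1 i2 u v hu hv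
      (HODE_swap23 _ _ _ _ _ _ _ _ _ ou) (HODE_swap23 _ _ _ _ _ _ _ _ _ ov)
  · exact no_common_12 e1 e2 e3 _ _ _ _ x h12 i1 i3 u v hu hv ou ov
  · exact no_common_01 e3 e2 e1 _ _ _ _ x h12.symm i3 i1 u v hu hv
      (HODE_swap13 _ _ _ _ _ _ _ _ _ ou) (HODE_swap13 _ _ _ _ _ _ _ _ _ ov)
  · exact no_common_01 e2 e1 e3 _ _ _ _ x h13 i2 i3 u v hu hv
      (HODE_swap12 _ _ _ _ _ _ _ _ _ ou) (HODE_swap12 _ _ _ _ _ _ _ _ _ ov)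
  · exact no_common_01 e1 e2 e3 _ _ _ _ x h23 i1 i3 u v hu hv ou ov

theorem isFac_mk (e1 e2 e3 : ℝ) (l0 l1 l2 l3 : ℕ) (b0 b1 b2 b3 : Bool) (N : ℕ)
    (h : aOf b0 l0 + aOf b1 l1 + aOf b2 l2 + aOf b3 l3 = -N) :
    IsFac e1 e2 e3 l0 l1 l2 l3 b0 b1 b2 b3
      (specP e1 e2 e3 (aOf b0 l0) (aOf b1 l1) (aOf b2 l2) (aOf b3 l3) N) :=
  Or.inr ⟨N, h, rfl⟩

theorem aOf_true (l : ℕ) : ((l : ℝ) + 1) / 2 = aOf true l := rfl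
theorem aOf_false (l : ℕ) : -(l : ℝ) / 2 = aOf false l := rfl

theorem aOf_cast (b : Bool) (l : ℕ) :
    aOf b l = (((if b then (l : ℤ) + 1 else -(l : ℤ)) : ℤ) : ℝ) / 2 := by
  cases b <;> simp [aOf]

theorem aOf_sum (l0 l1 l2 l3 : ℕ) (b0 b1 b2 b3 : Bool) (N : ℕ)
    (h : (if b0 then (l0 : ℤ) + 1 else -(l0 : ℤ)) + (if b1 then (l1 : ℤ) + 1 else -(l1 : ℤ))
      + (if b2 then (l2 : ℤ) + 1 else -(l2 : ℤ)) + (if b3 then (l3 : ℤ) + 1 else -(l3 : ℤ))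
      = -(2 * N)) :
    aOf b0 l0 + aOf b1 l1 + aOf b2 l2 + aOf b3 l3 = -N := by
  rw [aOf_cast, aOf_cast, aOf_cast, aOf_cast]
  have := congrArg (fun z : ℤ => (z : ℝ)) h
  simp only [Int.cast_add _ (ite _ _ _)] at this
  push_cast at this ⊢
  linarith

theorem fac_P0 (e1 e2 e3 : ℝ) (l0 l1 l2 l3 : ℕ) :
    if (l0 + l1 + l2 + l3) % 2 = 0 then
      IsFac e1 e2 e3 l0 l1 l2 l3 false false false false (specP0 e1 e2 e3 l0 l1 l2 l3)
    else
      IsFac e1 e2 e3 l0 l1 l2 l3 false true true true (specP0 e1 e2 e3 l0 l1 l2 l3) ∨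
      IsFac e1 e2 e3 l0 l1 l2 l3 true false false false (specP0 e1 e2 e3 l0 l1 l2 l3) := by
  unfold specP0
  simp only [aOf_true, aOf_false]
  split_ifs with c1 c2 c3
  · exact isFac_mk _ _ _ _ _ _ _ _ _ _ _ _ (aOf_sum _ _ _ _ _ _ _ _ _ (by simp; omega))
  · exact Or.inl (isFac_mk _ _ _ _ _ _ _ _ _ _ _ _ (aOf_sum _ _ _ _ _ _ _ _ _ (by simp; omega)))
  · exact Or.inl (Or.inl rfl)
  · exact Or.inr (isFac_mk _ _ _ _ _ _ _ _ _ _ _ _ (aOf_sum _ _ _ _ _ _ _ _ _ (by simp; omega)))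

theorem fac_P1 (e1 e2 e3 : ℝ) (l0 l1 l2 l3 : ℕ) :
    if (l0 + l1 + l2 + l3) % 2 = 0 then
      IsFac e1 e2 e3 l0 l1 l2 l3 false false true true (specP1 e1 e2 e3 l0 l1 l2 l3) ∨
      IsFac e1 e2 e3 l0 l1 l2 l3 true true false false (specP1 e1 e2 e3 l0 l1 l2 l3)
    else
      IsFac e1 e2 e3 l0 l1 l2 l3 true false true true (specP1 e1 e2 e3 l0 l1 l2 l3) ∨
      IsFac e1 e2 e3 l0 l1 l2 l3 false true false false (specP1 e1 e2 e3 l0 l1 l2 l3) := by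
  unfold specP1
  simp only [aOf_true, aOf_false]
  split_ifs with c1 c2 c3 c4 c5
  · exact Or.inl (isFac_mk _ _ _ _ _ _ _ _ _ _ _ _ (aOf_sum _ _ _ _ _ _ _ _ _ (by simp; omega)))
  · exact Or.inl (Or.inl rfl)
  · exact Or.inr (isFac_mk _ _ _ _ _ _ _ _ _ _ _ _ (aOf_sum _ _ _ _ _ _ _ _ _ (by simp; omega)))
  · exact Or.inl (isFac_mk _ _ _ _ _ _ _ _ _ _ _ _ (aOf_sum _ _ _ _ _ _ _ _ _ (by simp; omega)))
  · exact Or.inl (Or.inl rfl)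
  · exact Or.inr (isFac_mk _ _ _ _ _ _ _ _ _ _ _ _ (aOf_sum _ _ _ _ _ _ _ _ _ (by simp; omega)))

theorem fac_P2 (e1 e2 e3 : ℝ) (l0 l1 l2 l3 : ℕ) :
    if (l0 + l1 + l2 + l3) % 2 = 0 then
      IsFac e1 e2 e3 l0 l1 l2 l3 false true false true (specP2 e1 e2 e3 l0 l1 l2 l3) ∨
      IsFac e1 e2 e3 l0 l1 l2 l3 true false true false (specP2 e1 e2 e3 l0 l1 l2 l3)
    else
      IsFac e1 e2 e3 l0 l1 l2 l3 true true false true (specP2 e1 e2 e3 l0 l1 l2 l3) ∨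
      IsFac e1 e2 e3 l0 l1 l2 l3 false false true false (specP2 e1 e2 e3 l0 l1 l2 l3) := by
  unfold specP2
  simp only [aOf_true, aOf_false]
  split_ifs with c1 c2 c3 c4 c5
  · exact Or.inl (isFac_mk _ _ _ _ _ _ _ _ _ _ _ _ (aOf_sum _ _ _ _ _ _ _ _ _ (by simp; omega)))
  · exact Or.inl (Or.inl rfl)
  · exact Or.inr (isFac_mk _ _ _ _ _ _ _ _ _ _ _ _ (aOf_sum _ _ _ _ _ _ _ _ _ (by simp; omega)))
  · exact Or.inl (isFac_mk _ _ _ _ _ _ _ _ _ _ _ _ (aOf_sum _ _ _ _ _ _ _ _ _ (by simp; omega)))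
  · exact Or.inl (Or.inl rfl)
  · exact Or.inr (isFac_mk _ _ _ _ _ _ _ _ _ _ _ _ (aOf_sum _ _ _ _ _ _ _ _ _ (by simp; omega)))

theorem fac_P3 (e1 e2 e3 : ℝ) (l0 l1 l2 l3 : ℕ) :
    if (l0 + l1 + l2 + l3) % 2 = 0 then
      IsFac e1 e2 e3 l0 l1 l2 l3 false true true false (specP3 e1 e2 e3 l0 l1 l2 l3) ∨
      IsFac e1 e2 e3 l0 l1 l2 l3 true false false true (specP3 e1 e2 e3 l0 l1 l2 l3)
    else
      IsFac e1 e2 e3 l0 l1 l2 l3 true true true false (specP3 e1 e2 e3 l0 l1 l2 l3) ∨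
      IsFac e1 e2 e3 l0 l1 l2 l3 false false false true (specP3 e1 e2 e3 l0 l1 l2 l3) := by
  unfold specP3
  simp only [aOf_true, aOf_false]
  split_ifs with c1 c2 c3 c4 c5
  · exact Or.inl (isFac_mk _ _ _ _ _ _ _ _ _ _ _ _ (aOf_sum _ _ _ _ _ _ _ _ _ (by simp; omega)))
  · exact Or.inl (Or.inl rfl)
  · exact Or.inr (isFac_mk _ _ _ _ _ _ _ _ _ _ _ _ (aOf_sum _ _ _ _ _ _ _ _ _ (by simp; omega)))
  · exact Or.inl (isFac_mk _ _ _ _ _ _ _ _ _ _ _ _ (aOf_sum _ _ _ _ _ _ _ _ _ (by simp; omega)))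
  · exact Or.inl (Or.inl rfl)
  · exact Or.inr (isFac_mk _ _ _ _ _ _ _ _ _ _ _ _ (aOf_sum _ _ _ _ _ _ _ _ _ (by simp; omega)))

theorem specQ_good (e1 e2 e3 : ℝ) (hA : (e1 - e3) * (e2 - e3) < 0) (l0 l1 l2 l3 : ℕ)
    (h : LCond l0 l1 l2 l3) : GoodPoly (specQ e1 e2 e3 l0 l1 l2 l3) := by
  have h13 : e1 ≠ e3 := by rintro rfl; simp at hA
  have h23 : e2 ≠ e3 := by rintro rfl; simp at hA
  have h12 : e1 ≠ e2 := by rintro rfl; nlinarith [sq_nonneg (e1 - e3)]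
  have g0 := good_P0 e1 e2 e3 hA _ _ _ _ h
  have g1 := good_P1 e1 e2 e3 hA _ _ _ _ h
  have g2 := good_P2 e1 e2 e3 hA _ _ _ _ h
  have g3 := good_P3 e1 e2 e3 hA _ _ _ _ h
  have f0 := fac_P0 e1 e2 e3 l0 l1 l2 l3
  have f1 := fac_P1 e1 e2 e3 l0 l1 l2 l3
  have f2 := fac_P2 e1 e2 e3 l0 l1 l2 l3
  have f3 := fac_P3 e1 e2 e3 l0 l1 l2 l3
  unfold specQ
  generalize specP0 e1 e2 e3 l0 l1 l2 l3 = P0 at *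
  generalize specP1 e1 e2 e3 l0 l1 l2 l3 = P1 at *
  generalize specP2 e1 e2 e3 l0 l1 l2 l3 = P2 at *
  generalize specP3 e1 e2 e3 l0 l1 l2 l3 = P3 at *
  have cop := fun (b0 b1 b2 b3 c0 c1 c2 c3 : Bool) (p q : ℝ[X]) =>
    IsFac_coprime e1 e2 e3 h12 h13 h23 l0 l1 l2 l3 b0 b1 b2 b3 c0 c1 c2 c3 p q
  have k01 : ∀ x : ℝ, P0.eval x = 0 → P1.eval x = 0 → False := by
    split_ifs at f0 f1
    · rcases f1 with f1 | f1 <;> exact cop _ _ _ _ _ _ _ _ _ _ (by decide) f0 f1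
    · rcases f0 with f0 | f0 <;> rcases f1 with f1 | f1 <;>
        exact cop _ _ _ _ _ _ _ _ _ _ (by decide) f0 f1
  have k02 : ∀ x : ℝ, P0.eval x = 0 → P2.eval x = 0 → False := by
    split_ifs at f0 f2
    · rcases f2 with f2 | f2 <;> exact cop _ _ _ _ _ _ _ _ _ _ (by decide) f0 f2
    · rcases f0 with f0 | f0 <;> rcases f2 with f2 | f2 <;>
        exact cop _ _ _ _ _ _ _ _ _ _ (by decide) f0 f2
  have k03 : ∀ x : ℝ, P0.eval x = 0 → P3.eval x = 0 → False := by
    split_ifs at f0 f3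
    · rcases f3 with f3 | f3 <;> exact cop _ _ _ _ _ _ _ _ _ _ (by decide) f0 f3
    · rcases f0 with f0 | f0 <;> rcases f3 with f3 | f3 <;>
        exact cop _ _ _ _ _ _ _ _ _ _ (by decide) f0 f3
  have k12 : ∀ x : ℝ, P1.eval x = 0 → P2.eval x = 0 → False := by
    split_ifs at f1 f2 <;> rcases f1 with f1 | f1 <;> rcases f2 with f2 | f2 <;>
        exact cop _ _ _ _ _ _ _ _ _ _ (by decide) f1 f2
  have k13 : ∀ x : ℝ, P1.eval x = 0 → P3.eval x = 0 → False := by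
    split_ifs at f1 f3 <;> rcases f1 with f1 | f1 <;> rcases f3 with f3 | f3 <;>
        exact cop _ _ _ _ _ _ _ _ _ _ (by decide) f1 f3
  have k23 : ∀ x : ℝ, P2.eval x = 0 → P3.eval x = 0 → False := by
    split_ifs at f2 f3 <;> rcases f2 with f2 | f2 <;> rcases f3 with f3 | f3 <;>
        exact cop _ _ _ _ _ _ _ _ _ _ (by decide) f2 f3
  refine good_mul _ _ (good_mul _ _ (good_mul _ _ g0 g1 k01) g2 ?_) g3 ?_
  · intro x hx hy
    rw [eval_mul] at hx
    rcases mul_eq_zero.1 hx with hx | hx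
    · exact k02 x hx hy
    · exact k12 x hx hy
  · intro x hx hy
    rw [eval_mul, eval_mul] at hx
    rcases mul_eq_zero.1 hx with hx | hx
    · rcases mul_eq_zero.1 hx with hx | hx
      · exact k03 x hx hy
      · exact k13 x hx hy
    · exact k23 x hx hy

/-- **Theorem 1.1.** Let `l0,l1,l2,l3 ∈ ℤ_{≥0}` and `e1 > e3 > e2` with
`e1+e2+e3 = 0` (purely imaginary modulus). If (i) `l3 = 0` and `l0 ≥ l1+l2−1`, or
(ii) `l0+l3+1 = l1+l2`, `l2+l3 ≥ l0+l1+1`, `l1+l3 ≥ l0+l2+1`, or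
(iii) `l0+l3 = l1+l2+1`, `l0+l1 ≥ l2+l3+1`, `l0+l2 ≥ l1+l3+1`, then all roots of the
spectral polynomial `Q^{(l0,l1,l2,l3)}` are real and distinct. -/
theorem specQ_real_distinct_roots
    (l0 l1 l2 l3 : ℕ)
    (hcond : (l3 = 0 ∧ l1 + l2 ≤ l0 + 1) ∨
      (l0 + l3 + 1 = l1 + l2 ∧ l0 + l1 + 1 ≤ l2 + l3 ∧ l0 + l2 + 1 ≤ l1 + l3) ∨
      (l0 + l3 = l1 + l2 + 1 ∧ l2 + l3 + 1 ≤ l0 + l1 ∧ l1 + l3 + 1 ≤ l0 + l2))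
    (e1 e2 e3 : ℝ) (h13 : e3 < e1) (h32 : e2 < e3) (hsum : e1 + e2 + e3 = 0) :
    (specQ e1 e2 e3 l0 l1 l2 l3).map (algebraMap ℝ ℂ) ≠ 0 ∧
    ((specQ e1 e2 e3 l0 l1 l2 l3).map (algebraMap ℝ ℂ)).roots.Nodup ∧
    ∀ z ∈ ((specQ e1 e2 e3 l0 l1 l2 l3).map (algebraMap ℝ ℂ)).roots, z.im = 0 := by
  exact specQ_good e1 e2 e3 (mul_neg_of_pos_of_neg (by linarith) (by linarith)) l0 l1 l2 l3 hcond
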